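/- There exist constants ε₀ ∈ (0,1) and C > 0 with the following property. Let ν ∈ (0,1], k ∈ ℤ with |k| ≥ 1, ε ∈ (0, ε₀], and λ ∈ ℝ. Let w : [−1,1] → ℂ be twice continuously differentiable with w(−1) = w(1) = 0, and set F(y) = −ν(w''(y) − k²w(y)) + ik(y−λ)w(y) − ε·ν^{1/3}|k|^{2/3}w(y). If M ≥ 0 dominates F in H^{−1}, then ν‖w'‖_{L²} + ν^{2/3}|k|^{1/3}‖w‖_{L²} ≤ C·M. -/

import Mathlib

/-- The `L²` norm of a function on the interval `[-1,1]`. -/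
noncomputable def nL2 (f : ℝ → ℂ) : ℝ :=
  (∫ y in Set.Icc (-1:ℝ) 1, ‖f y‖ ^ 2) ^ ((1:ℝ)/2)

/-- The `L²` pairing of two functions on the interval `[-1,1]`. -/
noncomputable def innI (f g : ℝ → ℂ) : ℂ :=
  ∫ y in Set.Icc (-1:ℝ) 1, f y * (starRingEnd ℂ) (g y)

/-- `M ≥ 0` dominates `F` in `H^{-1}` : `|⟨F, φ⟩| ≤ M ‖φ‖_{H¹}` for every `C¹` function
vanishing at `±1`. -/
def Dominates (F : ℝ → ℂ) (M : ℝ) : Prop :=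
  ∀ g : ℝ → ℂ, ContDiff ℝ 1 g → g (-1) = 0 → g 1 = 0 →
    ‖innI F g‖ ≤ M * ((nL2 g ^ 2 + nL2 (deriv g) ^ 2) ^ ((1:ℝ)/2))

set_option maxHeartbeats 2000000 in
/-- `H^{-1}` resolvent estimate for the vorticity with Navier-slip boundary conditions. -/

lemma nL2_sq (f : ℝ → ℂ) : nL2 f = √(∫ y in (-1:ℝ)..1, ‖f y‖ ^ 2) := by
  unfold nL2
  rw [← Real.sqrt_eq_rpow, MeasureTheory.integral_Icc_eq_integral_Ioc,
    intervalIntegral.integral_of_le (by norm_num)]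

lemma int_sq_nonneg (f : ℝ → ℂ) : 0 ≤ ∫ y in (-1:ℝ)..1, ‖f y‖ ^ 2 :=
  intervalIntegral.integral_nonneg (by norm_num) (fun _ _ => by positivity)

lemma innI_eq (f g : ℝ → ℂ) :
    innI f g = ∫ y in (-1:ℝ)..1, f y * (starRingEnd ℂ) (g y) := by
  unfold innI
  rw [MeasureTheory.integral_Icc_eq_integral_Ioc,
    intervalIntegral.integral_of_le (by norm_num)]

lemma parts (w g : ℝ → ℂ) (hw : ContDiff ℝ 2 w) (hg : ContDiff ℝ 1 g)
    (h1 : g (-1) = 0) (h2 : g 1 = 0) :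
    ∫ y in (-1:ℝ)..1, (deriv (deriv w) y * (starRingEnd ℂ) (g y)
      + deriv w y * (starRingEnd ℂ) (deriv g y)) = 0 := by
  have hw' : ContDiff ℝ 1 (deriv w) := by
    have : ContDiff ℝ (1+1) w := by simpa [one_add_one_eq_two] using hw
    exact (contDiff_succ_iff_deriv.1 this).2.2
  have c2 : Continuous (deriv (deriv w)) := hw'.continuous_deriv (by norm_num)
  have c1 : Continuous (deriv w) := hw'.continuous
  have d1 : Continuous (deriv g) := hg.continuous_deriv (by norm_num)
  have d0 : Continuous g := hg.continuous
  rw [intervalIntegral.integral_eq_sub_of_hasDerivAt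
    (f := fun y => deriv w y * (starRingEnd ℂ) (g y))]
  · simp [h1, h2]
  · intro y _
    have e1 := (hw'.differentiable (by norm_num) y).hasDerivAt
    have e2 := (hg.differentiable (by norm_num) y).hasDerivAt
    have e3 : HasDerivAt (fun y => (starRingEnd ℂ) (g y)) ((starRingEnd ℂ) (deriv g y)) y := by
      simpa using e2.star
    exact e1.mul e3
  · apply Continuous.intervalIntegrable
    fun_prop

lemma pairing (w g : ℝ → ℂ) (hw : ContDiff ℝ 2 w) (hg : ContDiff ℝ 1 g)
    (h1 : g (-1) = 0) (h2 : g 1 = 0) (ν e lam : ℝ) (k : ℤ) :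
    innI (fun y : ℝ => -(ν : ℂ) * (deriv (deriv w) y - (k:ℂ)^2 * w y)
            + Complex.I * (k:ℂ) * ((y:ℂ) - (lam:ℂ)) * w y
            - (e : ℂ) * w y) g =
    ∫ y in (-1:ℝ)..1, ((ν:ℂ) * (deriv w y * (starRingEnd ℂ) (deriv g y))
      + (((ν * k^2 - e : ℝ) : ℂ) + Complex.I * ((k * (y - lam) : ℝ) : ℂ))
        * (w y * (starRingEnd ℂ) (g y))) := by
  have hw' : ContDiff ℝ 1 (deriv w) := by
    have : ContDiff ℝ (1+1) w := by simpa [one_add_one_eq_two] using hw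
    exact (contDiff_succ_iff_deriv.1 this).2.2
  have c2 : Continuous (deriv (deriv w)) := hw'.continuous_deriv (by norm_num)
  have c1 : Continuous (deriv w) := hw'.continuous
  have c0 : Continuous w := hw.continuous
  have d1 : Continuous (deriv g) := hg.continuous_deriv (by norm_num)
  have d0 : Continuous g := hg.continuous
  have hp := parts w g hw hg h1 h2
  rw [innI_eq]
  rw [← sub_eq_zero, ← intervalIntegral.integral_sub]
  · have : (0:ℂ) = (-(ν:ℂ)) * ∫ y in (-1:ℝ)..1, (deriv (deriv w) y * (starRingEnd ℂ) (g y)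
      + deriv w y * (starRingEnd ℂ) (deriv g y)) := by rw [hp, mul_zero]
    rw [this, ← intervalIntegral.integral_const_mul]
    congr 1
    ext y
    push_cast
    ring
  · apply Continuous.intervalIntegrable
    fun_prop
  · apply Continuous.intervalIntegrable
    fun_prop

lemma re_pairing (w : ℝ → ℂ) (hw : ContDiff ℝ 2 w)
    (h1 : w (-1) = 0) (h2 : w 1 = 0) (ν e lam : ℝ) (k : ℤ) :
    (innI (fun y : ℝ => -(ν : ℂ) * (deriv (deriv w) y - (k:ℂ)^2 * w y)
            + Complex.I * (k:ℂ) * ((y:ℂ) - (lam:ℂ)) * w y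
            - (e : ℂ) * w y) w).re =
    ν * (∫ y in (-1:ℝ)..1, ‖deriv w y‖^2) + (ν * k^2 - e) * ∫ y in (-1:ℝ)..1, ‖w y‖^2 := by
  have hg : ContDiff ℝ 1 w := hw.of_le (by norm_num)
  have d1 : Continuous (deriv w) := hg.continuous_deriv (by norm_num)
  have d0 : Continuous w := hg.continuous
  rw [pairing w w hw hg h1 h2, ← Complex.reCLM_apply, ← ContinuousLinearMap.intervalIntegral_comp_comm,
    ← intervalIntegral.integral_const_mul, ← intervalIntegral.integral_const_mul,
    ← intervalIntegral.integral_add]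
  · congr 1
    ext y
    rw [Complex.mul_conj, Complex.mul_conj, Complex.reCLM_apply, Complex.normSq_eq_norm_sq,
      Complex.normSq_eq_norm_sq]
    simp only [Complex.add_re, Complex.mul_re, Complex.mul_im, Complex.add_im, Complex.ofReal_re,
      Complex.ofReal_im, Complex.I_re, Complex.I_im]
    ring
  · apply Continuous.intervalIntegrable
    fun_prop
  · apply Continuous.intervalIntegrable
    fun_prop
  · apply Continuous.intervalIntegrable
    fun_prop

/-- rational cutoff -/
noncomputable def cut (δ lam y : ℝ) : ℝ := δ * (y - lam) / (δ^2 + (y-lam)^2)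
/-- derivative of the cutoff -/
noncomputable def cut' (δ lam y : ℝ) : ℝ := δ * (δ^2 - (y - lam)^2) / (δ^2 + (y-lam)^2)^2

lemma cut_cd (δ lam : ℝ) (hδ : 0 < δ) : ContDiff ℝ 1 (cut δ lam) := by
  unfold cut
  apply ContDiff.div
  · fun_prop
  · fun_prop
  · intro y; positivity

lemma cut_hd (δ lam y : ℝ) (hδ : 0 < δ) : HasDerivAt (cut δ lam) (cut' δ lam y) y := by
  have hn : δ^2 + (y-lam)^2 ≠ 0 := by positivity
  have h := ((((hasDerivAt_id y).sub_const lam).const_mul δ).div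
    ((((hasDerivAt_id y).sub_const lam).pow 2).const_add (δ^2)) hn)
  refine HasDerivAt.congr_deriv (f := cut δ lam) h ?_
  unfold cut'
  simp only [Pi.sub_apply, Pi.pow_apply, id]
  norm_num
  ring

lemma cut'_cont (δ lam : ℝ) (hδ : 0 < δ) : Continuous (cut' δ lam) := by
  unfold cut'
  apply Continuous.div
  · fun_prop
  · fun_prop
  · intro y; positivity

lemma cut_abs (δ lam y : ℝ) (hδ : 0 < δ) : |cut δ lam y| ≤ 1/2 := by
  unfold cut
  have hn : 0 < δ^2 + (y-lam)^2 := by positivity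
  rw [abs_le, le_div_iff₀ hn, div_le_iff₀ hn]
  constructor
  · nlinarith [sq_nonneg (δ + (y-lam))]
  · nlinarith [sq_nonneg (δ - (y-lam))]

lemma cut'_abs (δ lam y : ℝ) (hδ : 0 < δ) : |cut' δ lam y| ≤ 1/δ := by
  unfold cut'
  have hn : 0 < δ^2 + (y-lam)^2 := by positivity
  rw [abs_div, div_le_div_iff₀ (by positivity) hδ, abs_mul, abs_of_pos hδ, abs_of_pos (pow_pos hn 2)]
  have h : |δ^2 - (y-lam)^2| ≤ δ^2 + (y-lam)^2 := by
    rw [abs_le]; constructor <;> nlinarith [sq_nonneg δ, sq_nonneg (y-lam)]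
  nlinarith [sq_nonneg (y-lam), sq_nonneg δ, mul_le_mul_of_nonneg_left h (sq_nonneg δ)]

lemma cut_low (δ lam y : ℝ) (hδ : 0 < δ) :
    1/2 ≤ δ * cut' δ lam y + (y-lam)/δ * cut δ lam y := by
  have hn : 0 < δ^2 + (y-lam)^2 := by positivity
  have : δ * cut' δ lam y + (y-lam)/δ * cut δ lam y
      = (δ^4 + (y-lam)^4)/(δ^2 + (y-lam)^2)^2 := by
    unfold cut cut'
    field_simp
    ring
  rw [this, le_div_iff₀ (by positivity)]
  nlinarith [sq_nonneg (δ^2 - (y-lam)^2)]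

lemma cut_nonneg (δ lam y : ℝ) (hδ : 0 < δ) : 0 ≤ (y-lam) * cut δ lam y := by
  unfold cut
  have : (y-lam) * (δ * (y - lam) / (δ^2 + (y-lam)^2)) =
    δ * (y - lam)^2 / (δ^2 + (y-lam)^2) := by ring
  rw [this]; positivity

lemma cutw_hd (w : ℝ → ℂ) (hw : ContDiff ℝ 1 w) (δ lam y : ℝ) (hδ : 0 < δ) :
    HasDerivAt (fun y => (cut δ lam y : ℂ) * w y)
      ((cut' δ lam y : ℂ) * w y + (cut δ lam y : ℂ) * deriv w y) y :=
  (cut_hd δ lam y hδ).ofReal_comp.mul (hw.differentiable (by norm_num) y).hasDerivAt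

lemma cutw_cd (w : ℝ → ℂ) (hw : ContDiff ℝ 1 w) (δ lam : ℝ) (hδ : 0 < δ) :
    ContDiff ℝ 1 (fun y => (cut δ lam y : ℂ) * w y) :=
  (Complex.ofRealCLM.contDiff.comp (cut_cd δ lam hδ)).mul hw

lemma im_pairing (w : ℝ → ℂ) (hw : ContDiff ℝ 2 w)
    (h1 : w (-1) = 0) (h2 : w 1 = 0) (ν e lam δ : ℝ) (hν : 0 < ν) (hδ : 0 < δ) (k : ℤ) :
    |(k:ℝ)| * (∫ y in (-1:ℝ)..1, (y - lam) * cut δ lam y * ‖w y‖^2) ≤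
    ‖innI (fun y : ℝ => -(ν : ℂ) * (deriv (deriv w) y - (k:ℂ)^2 * w y)
            + Complex.I * (k:ℂ) * ((y:ℂ) - (lam:ℂ)) * w y
            - (e : ℂ) * w y) (fun y => (cut δ lam y : ℂ) * w y)‖ +
    ν / δ * (∫ y in (-1:ℝ)..1, ‖w y‖ * ‖deriv w y‖) := by
  have hg : ContDiff ℝ 1 w := hw.of_le (by norm_num)
  have d1 : Continuous (deriv w) := hg.continuous_deriv (by norm_num)
  have d0 : Continuous w := hg.continuous
  have a0 : Continuous (cut δ lam) := (cut_cd δ lam hδ).continuous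
  have a1 : Continuous (cut' δ lam) := cut'_cont δ lam hδ
  have hd : deriv (fun y => (cut δ lam y : ℂ) * w y) =
    fun y => ((cut' δ lam y : ℂ) * w y + (cut δ lam y : ℂ) * deriv w y) :=
    funext fun y => (cutw_hd w hg δ lam y hδ).deriv
  set X := innI (fun y : ℝ => -(ν : ℂ) * (deriv (deriv w) y - (k:ℂ)^2 * w y)
            + Complex.I * (k:ℂ) * ((y:ℂ) - (lam:ℂ)) * w y
            - (e : ℂ) * w y) (fun y => (cut δ lam y : ℂ) * w y) with hX
  have him : X.im = ν * (∫ y in (-1:ℝ)..1, cut' δ lam y * (deriv w y * (starRingEnd ℂ) (w y)).im)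
      + k * (∫ y in (-1:ℝ)..1, (y - lam) * cut δ lam y * ‖w y‖^2) := by
    rw [hX, pairing w _ hw (cutw_cd w hg δ lam hδ) (by simp [h1]) (by simp [h2]), hd,
      ← Complex.imCLM_apply, ← ContinuousLinearMap.intervalIntegral_comp_comm,
      ← intervalIntegral.integral_const_mul, ← intervalIntegral.integral_const_mul,
      ← intervalIntegral.integral_add]
    · congr 1
      ext y
      have e1 : ‖w y‖^2 = (w y).re * (w y).re + (w y).im * (w y).im := by
        rw [← Complex.normSq_eq_norm_sq, Complex.normSq_apply]
      rw [Complex.imCLM_apply, e1]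
      simp only [Complex.add_re, Complex.mul_re, Complex.mul_im, Complex.add_im, Complex.ofReal_re,
        Complex.ofReal_im, Complex.I_re, Complex.I_im, map_add, map_mul, Complex.conj_ofReal,
        Complex.conj_re, Complex.conj_im]
      ring
    · apply Continuous.intervalIntegrable
      fun_prop
    · apply Continuous.intervalIntegrable
      fun_prop
    · apply Continuous.intervalIntegrable
      fun_prop
  have hb : |∫ y in (-1:ℝ)..1, cut' δ lam y * (deriv w y * (starRingEnd ℂ) (w y)).im| ≤
      1/δ * (∫ y in (-1:ℝ)..1, ‖w y‖ * ‖deriv w y‖) := by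
    rw [← intervalIntegral.integral_const_mul, ← Real.norm_eq_abs]
    apply intervalIntegral.norm_integral_le_of_norm_le (by norm_num)
    · refine Filter.Eventually.of_forall fun y _ => ?_
      rw [Real.norm_eq_abs, abs_mul]
      apply mul_le_mul (cut'_abs δ lam y hδ) _ (abs_nonneg _) (by positivity)
      refine (Complex.abs_im_le_norm _).trans ?_
      rw [norm_mul, RCLike.norm_conj, mul_comm]
    · apply Continuous.intervalIntegrable
      fun_prop
  have hJ : 0 ≤ ∫ y in (-1:ℝ)..1, (y - lam) * cut δ lam y * ‖w y‖^2 :=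
    intervalIntegral.integral_nonneg (by norm_num)
      fun y _ => mul_nonneg (cut_nonneg δ lam y hδ) (by positivity)
  have hXi := Complex.abs_im_le_norm X
  rw [← abs_of_nonneg hJ, ← abs_mul]
  have h3 : (k:ℝ) * (∫ y in (-1:ℝ)..1, (y - lam) * cut δ lam y * ‖w y‖^2) = X.im -
    ν * (∫ y in (-1:ℝ)..1, cut' δ lam y * (deriv w y * (starRingEnd ℂ) (w y)).im) := by
    rw [him]; ring
  rw [h3]
  refine (abs_sub _ _).trans (add_le_add hXi ?_)
  rw [abs_mul, abs_of_pos hν]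
  calc _ ≤ ν * (1/δ * (∫ y in (-1:ℝ)..1, ‖w y‖ * ‖deriv w y‖)) :=
        mul_le_mul_of_nonneg_left hb hν.le
    _ = _ := by ring

lemma lower (w : ℝ → ℂ) (hg : ContDiff ℝ 1 w)
    (h1 : w (-1) = 0) (h2 : w 1 = 0) (lam δ : ℝ) (hδ : 0 < δ) :
    1/2 * (∫ y in (-1:ℝ)..1, ‖w y‖^2) ≤
      1/δ * (∫ y in (-1:ℝ)..1, (y - lam) * cut δ lam y * ‖w y‖^2)
      + δ * (∫ y in (-1:ℝ)..1, ‖w y‖ * ‖deriv w y‖) := by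
  have d1 : Continuous (deriv w) := hg.continuous_deriv (by norm_num)
  have d0 : Continuous w := hg.continuous
  have a0 : Continuous (cut δ lam) := (cut_cd δ lam hδ).continuous
  have a1 : Continuous (cut' δ lam) := cut'_cont δ lam hδ
  have hz : ∫ y in (-1:ℝ)..1, (cut' δ lam y * ‖w y‖^2
      + cut δ lam y * (2 * inner ℝ (w y) (deriv w y))) = 0 := by
    rw [intervalIntegral.integral_eq_sub_of_hasDerivAt (f := fun y => cut δ lam y * ‖w y‖^2)]
    · simp [h1, h2]
    · intro y _
      exact (cut_hd δ lam y hδ).mul ((hg.differentiable (by norm_num) y).hasDerivAt.norm_sq)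
    · apply Continuous.intervalIntegrable
      fun_prop
  have key : (∫ y in (-1:ℝ)..1, 1/2 * ‖w y‖^2) ≤ ∫ y in (-1:ℝ)..1,
      ((1/δ * ((y - lam) * cut δ lam y * ‖w y‖^2) + δ * (‖w y‖ * ‖deriv w y‖))
        + δ * (cut' δ lam y * ‖w y‖^2 + cut δ lam y * (2 * inner ℝ (w y) (deriv w y)))) := by
    apply intervalIntegral.integral_mono_on (by norm_num)
    · apply Continuous.intervalIntegrable
      fun_prop
    · apply Continuous.intervalIntegrable
      fun_prop
    · intro y _
      have i1 := mul_le_mul_of_nonneg_right (cut_low δ lam y hδ) (sq_nonneg ‖w y‖)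
      have i2 : |cut δ lam y * (2 * inner ℝ (w y) (deriv w y))| ≤ ‖w y‖ * ‖deriv w y‖ := by
        rw [abs_mul, abs_mul, abs_two]
        have := mul_le_mul (cut_abs δ lam y hδ) (abs_real_inner_le_norm (w y) (deriv w y))
          (abs_nonneg _) (by norm_num)
        linarith
      have i3 := mul_le_mul_of_nonneg_left (abs_le.1 i2).1 hδ.le
      have i4 : (δ * cut' δ lam y + (y-lam)/δ * cut δ lam y) * ‖w y‖^2
        = 1/δ * ((y - lam) * cut δ lam y * ‖w y‖^2) + δ * (cut' δ lam y * ‖w y‖^2) := by ring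
      linarith
  rw [intervalIntegral.integral_add, intervalIntegral.integral_add,
    intervalIntegral.integral_const_mul, intervalIntegral.integral_const_mul,
    intervalIntegral.integral_const_mul, intervalIntegral.integral_const_mul, hz] at key
  · linarith
  all_goals
    apply Continuous.intervalIntegrable
    fun_prop

lemma young (w : ℝ → ℂ) (hg : ContDiff ℝ 1 w) (δ : ℝ) (hδ : 0 < δ) :
    2 / δ * (∫ y in (-1:ℝ)..1, ‖w y‖ * ‖deriv w y‖) ≤
    1/8 * ((∫ y in (-1:ℝ)..1, ‖w y‖^2) / δ^2) + 8 * (∫ y in (-1:ℝ)..1, ‖deriv w y‖^2) := by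
  have d1 : Continuous (deriv w) := hg.continuous_deriv (by norm_num)
  have d0 : Continuous w := hg.continuous
  have key : (∫ y in (-1:ℝ)..1, 2 / δ * (‖w y‖ * ‖deriv w y‖)) ≤
      ∫ y in (-1:ℝ)..1, (1/8/δ^2 * ‖w y‖^2 + 8 * ‖deriv w y‖^2) := by
    apply intervalIntegral.integral_mono_on (by norm_num)
    · apply Continuous.intervalIntegrable
      fun_prop
    · apply Continuous.intervalIntegrable
      fun_prop
    · intro y _
      have e : 1/8/δ^2 * ‖w y‖^2 + 8 * ‖deriv w y‖^2 - 2 / δ * (‖w y‖ * ‖deriv w y‖)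
        = 1/8 * (‖w y‖/δ - 8 * ‖deriv w y‖)^2 := by ring
      nlinarith [sq_nonneg (‖w y‖/δ - 8 * ‖deriv w y‖)]
  rw [intervalIntegral.integral_add, intervalIntegral.integral_const_mul,
    intervalIntegral.integral_const_mul, intervalIntegral.integral_const_mul] at key
  · calc _ ≤ _ := key
      _ = _ := by ring
  all_goals
    apply Continuous.intervalIntegrable
    fun_prop

lemma testnorm (w : ℝ → ℂ) (hg : ContDiff ℝ 1 w) (lam δ : ℝ) (hδ : 0 < δ) :
    (∫ y in (-1:ℝ)..1, ‖(cut δ lam y : ℂ) * w y‖^2)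
      + (∫ y in (-1:ℝ)..1, ‖deriv (fun y => (cut δ lam y : ℂ) * w y) y‖^2) ≤
    ((∫ y in (-1:ℝ)..1, ‖w y‖^2) + (∫ y in (-1:ℝ)..1, ‖deriv w y‖^2))
      + 4 * ((∫ y in (-1:ℝ)..1, ‖w y‖^2) / δ^2) := by
  have d1 : Continuous (deriv w) := hg.continuous_deriv (by norm_num)
  have d0 : Continuous w := hg.continuous
  have a0 : Continuous (cut δ lam) := (cut_cd δ lam hδ).continuous
  have a1 : Continuous (cut' δ lam) := cut'_cont δ lam hδ
  have hd : deriv (fun y => (cut δ lam y : ℂ) * w y) =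
    fun y => ((cut' δ lam y : ℂ) * w y + (cut δ lam y : ℂ) * deriv w y) :=
    funext fun y => (cutw_hd w hg δ lam y hδ).deriv
  rw [hd]
  have key : (∫ y in (-1:ℝ)..1, (‖(cut δ lam y : ℂ) * w y‖^2 +
        ‖((cut' δ lam y : ℂ) * w y + (cut δ lam y : ℂ) * deriv w y)‖^2)) ≤
      ∫ y in (-1:ℝ)..1, ((‖w y‖^2 + ‖deriv w y‖^2) + 4 / δ^2 * ‖w y‖^2) := by
    apply intervalIntegral.integral_mono_on (by norm_num)
    · apply Continuous.intervalIntegrable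
      fun_prop
    · apply Continuous.intervalIntegrable
      fun_prop
    · intro y _
      have n1 : ‖(cut δ lam y : ℂ) * w y‖ ≤ 1/2 * ‖w y‖ := by
        rw [norm_mul, Complex.norm_real]
        exact mul_le_mul_of_nonneg_right (cut_abs δ lam y hδ) (norm_nonneg _)
      have n2 : ‖((cut' δ lam y : ℂ) * w y + (cut δ lam y : ℂ) * deriv w y)‖ ≤
          ‖w y‖ / δ + 1/2 * ‖deriv w y‖ := by
        refine (norm_add_le _ _).trans (add_le_add ?_ ?_)
        · rw [norm_mul, Complex.norm_real, div_eq_mul_one_div, mul_comm]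
          exact mul_le_mul_of_nonneg_left (cut'_abs δ lam y hδ) (norm_nonneg _)
        · rw [norm_mul, Complex.norm_real]
          exact mul_le_mul_of_nonneg_right (cut_abs δ lam y hδ) (norm_nonneg _)
      have m1 := pow_le_pow_left₀ (norm_nonneg _) n1 2
      have m2 := pow_le_pow_left₀ (norm_nonneg _) n2 2
      have e : 4 / δ^2 * ‖w y‖^2 = 4 * (‖w y‖ / δ)^2 := by ring
      rw [e]
      nlinarith [sq_nonneg (‖w y‖ / δ - 1/2 * ‖deriv w y‖), sq_nonneg (‖w y‖),
        sq_nonneg (‖w y‖ / δ), sq_nonneg ‖deriv w y‖]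
  rw [intervalIntegral.integral_add, intervalIntegral.integral_add, intervalIntegral.integral_add,
    intervalIntegral.integral_const_mul] at key
  · calc _ ≤ _ := key
      _ = _ := by ring
  all_goals
    apply Continuous.intervalIntegrable
    fun_prop

/-- Final algebra. -/
lemma final (E N M ε : ℝ) (hE : 0 ≤ E) (hN : 0 ≤ N) (hM : 0 ≤ M) (hε : ε ≤ 1/136)
    (h1 : E^2 ≤ M * E + ε * N^2) (h2 : 1/2 * N^2 ≤ M * (E + 2 * N) + 1/8 * N^2 + 8 * E^2) :
    E + N ≤ 16 * M := by
  have a : N^2 ≤ 34 * (E^2 + M^2) := by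
    nlinarith [sq_nonneg (N - 8 * M), sq_nonneg (E - M)]
  have b : ε * N^2 ≤ 1/136 * N^2 := mul_le_mul_of_nonneg_right hε (sq_nonneg _)
  have c : E^2 ≤ 3 * M^2 := by nlinarith [sq_nonneg (E - M)]
  have hE2 : E ≤ 2 * M := abs_le_of_sq_le_sq' (by nlinarith) (by positivity) |>.2
  have hN2 : N ≤ 14 * M := abs_le_of_sq_le_sq' (by nlinarith) (by positivity) |>.2
  linarith

set_option maxHeartbeats 2000000 in
/-- `H^{-1}` resolvent estimate for the vorticity with Navier-slip boundary conditions. -/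
theorem statement3 :
    ∃ ε₀ C : ℝ, 0 < ε₀ ∧ ε₀ < 1 ∧ 0 < C ∧
      ∀ (ν : ℝ) (k : ℤ) (ε lam : ℝ) (w F : ℝ → ℂ) (M : ℝ),
        0 < ν → ν ≤ 1 → 1 ≤ |k| → 0 < ε → ε ≤ ε₀ →
        ContDiff ℝ 2 w → w (-1) = 0 → w 1 = 0 →
        (F = fun y : ℝ => -(ν : ℂ) * (deriv (deriv w) y - (k:ℂ)^2 * w y)
            + Complex.I * (k:ℂ) * ((y:ℂ) - (lam:ℂ)) * w y
            - ((ε * ν ^ ((1:ℝ)/3) * |(k:ℝ)| ^ ((2:ℝ)/3) : ℝ) : ℂ) * w y) →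
        0 ≤ M → Dominates F M →
        ν * nL2 (deriv w) + ν ^ ((2:ℝ)/3) * |(k:ℝ)| ^ ((1:ℝ)/3) * nL2 w ≤ C * M := by
  refine ⟨1/136, 16, by norm_num, by norm_num, by norm_num, ?_⟩
  intro ν k ε lam w F M hν hν1 hk hε hε0 hw h1 h2 hF hM hD
  have hg : ContDiff ℝ 1 w := hw.of_le (by norm_num)
  have hK1 : (1:ℝ) ≤ |(k:ℝ)| := by exact_mod_cast hk
  have hK : (0:ℝ) < |(k:ℝ)| := by linarith
  obtain ⟨δ, hδ, hδ1, hδ2, hδ3⟩ : ∃ δ : ℝ, 0 < δ ∧ ν ^ ((1:ℝ)/3) * |(k:ℝ)| ^ ((2:ℝ)/3) = ν / δ^2 ∧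
      ν ^ ((2:ℝ)/3) * |(k:ℝ)| ^ ((1:ℝ)/3) = ν / δ ∧ |(k:ℝ)| * δ = ν / δ^2 := by
    have third : ∀ x : ℝ, 0 < x → ∃ p : ℝ, 0 < p ∧ x = p^3 ∧ x ^ ((1:ℝ)/3) = p ∧
        x ^ ((2:ℝ)/3) = p^2 := by
      intro x hx
      refine ⟨x ^ ((1:ℝ)/3), by positivity, ?_, rfl, ?_⟩
      · rw [← Real.rpow_natCast, ← Real.rpow_mul hx.le]; norm_num
      · rw [← Real.rpow_natCast, ← Real.rpow_mul hx.le]; norm_num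
    obtain ⟨p, hp, p1, p2, p3⟩ := third ν hν
    obtain ⟨q, hq, q1, q2, q3⟩ := third _ hK
    refine ⟨p / q, by positivity, ?_, ?_, ?_⟩
    · rw [p2, q3, p1]; field_simp
    · rw [p3, q2, p1]; field_simp
    · rw [q1, p1]; field_simp
  have hFe : F = fun y : ℝ => -(ν : ℂ) * (deriv (deriv w) y - (k:ℂ)^2 * w y)
            + Complex.I * (k:ℂ) * ((y:ℂ) - (lam:ℂ)) * w y
            - ((ε * (ν / δ^2) : ℝ) : ℂ) * w y := by
    rw [hF, ← hδ1, mul_assoc]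
  have r1 := re_pairing w hw h1 h2 ν (ε * (ν / δ^2)) lam k
  have r2 := im_pairing w hw h1 h2 ν (ε * (ν / δ^2)) lam δ hν hδ k
  rw [← hFe] at r1 r2
  have r3 := lower w hg h1 h2 lam δ hδ
  have r4 := young w hg δ hδ
  have r5 := testnorm w hg lam δ hδ
  have D1 := hD w hg h1 h2
  have D2 := hD _ (cutw_cd w hg δ lam hδ) (by simp [h1]) (by simp [h2])
  rw [nL2_sq, nL2_sq, Real.sq_sqrt (int_sq_nonneg _), Real.sq_sqrt (int_sq_nonneg _),
    ← Real.sqrt_eq_rpow] at D1 D2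
  rw [hδ2, nL2_sq, nL2_sq]
  have hA := int_sq_nonneg w
  have hB := int_sq_nonneg (deriv w)
  set A := ∫ y in (-1:ℝ)..1, ‖w y‖ ^ 2
  set B := ∫ y in (-1:ℝ)..1, ‖deriv w y‖ ^ 2
  set P := ∫ y in (-1:ℝ)..1, ‖w y‖ * ‖deriv w y‖
  set J := ∫ y in (-1:ℝ)..1, (y - lam) * cut δ lam y * ‖w y‖^2
  clear_value A B P J
  clear hF hFe hD
  obtain ⟨S, hS⟩ : ∃ S, S = √(A + B) := ⟨_, rfl⟩
  obtain ⟨n, hn⟩ : ∃ n, n = √A / δ := ⟨_, rfl⟩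
  have hS0 : 0 ≤ S := hS ▸ Real.sqrt_nonneg _
  have hn0 : 0 ≤ n := hn ▸ (by positivity)
  have hS2 : S^2 = A + B := by rw [hS, Real.sq_sqrt (by positivity)]
  have hn2 : n^2 = A / δ^2 := by rw [hn, div_pow, Real.sq_sqrt hA]
  have hBS : √B ≤ S := by rw [hS]; exact Real.sqrt_le_sqrt (by linarith)
  rw [← hS] at D1
  rw [← hn2] at r4 r5
  rw [← hS2] at r5
  have T : ‖innI F (fun y => (cut δ lam y : ℂ) * w y)‖ ≤ M * (S + 2 * n) := by
    refine D2.trans (mul_le_mul_of_nonneg_left ?_ hM)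
    refine (Real.sqrt_le_sqrt r5).trans ?_
    rw [Real.sqrt_le_left (by positivity)]
    nlinarith [mul_nonneg hS0 hn0]
  have R : ν * S^2 ≤ M * S + ε * (ν * n^2) := by
    have g1 := (Complex.re_le_norm _).trans D1
    rw [r1] at g1
    have g2 : ν * A ≤ ν * (k:ℝ)^2 * A := by
      have : (1:ℝ) ≤ (k:ℝ)^2 := by rw [← sq_abs]; nlinarith
      nlinarith [mul_nonneg hν.le hA]
    have g3 : ε * (ν / δ^2) * A = ε * (ν * n^2) := by rw [hn2]; ring
    have g4 : ν * S^2 = ν * A + ν * B := by rw [hS2]; ring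
    have g5 : (ν * (k:ℝ)^2 - ε * (ν / δ^2)) * A = ν * (k:ℝ)^2 * A - ε * (ν / δ^2) * A := by ring
    linarith
  have Q : 1/2 * (ν * n^2) ≤ M * (S + 2 * n) + 1/8 * (ν * n^2) + 8 * (ν * S^2) := by
    have g1 := mul_le_mul_of_nonneg_left r3 (show 0 ≤ ν / δ^2 by positivity)
    have g2 : ν / δ^2 * (1/2 * A) = 1/2 * (ν * n^2) := by rw [hn2]; ring
    have g3 : ν / δ^2 * (1/δ * J + δ * P) = |(k:ℝ)| * J + ν / δ * P := by
      rw [mul_add, ← hδ3]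
      congr 1
      · field_simp
      · rw [hδ3]; field_simp
    have g4 := mul_le_mul_of_nonneg_left r4 hν.le
    have g5 : ν * (2 / δ * P) = 2 * (ν / δ * P) := by ring
    have g6 : ν * B ≤ ν * S^2 := mul_le_mul_of_nonneg_left (by linarith) hν.le
    linarith
  have f := final (ν * S) (ν * n) M ε (by positivity) (by positivity) hM hε0
    (by nlinarith [mul_le_mul_of_nonneg_left R hν.le])
    (by nlinarith [mul_le_mul_of_nonneg_left Q hν.le])
  have e1 : ν / δ * √A = ν * n := by rw [hn]; ring
  rw [e1]
  nlinarith [mul_le_mul_of_nonneg_left hBS hν.le]
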